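/- Let X ⊂ ℝ^d be a finite database, D ⊂ X a finite set of sites, U ⊆ ℝ^d a set containing X and the query q with diameter at most R̄, and let U_j be the Voronoi cell of the site d_j (the set of points of U whose unique nearest site in D is d_j), with d_j ∈ U_j and diameter of U_j at most R̄_j. Let GT(q) ∈ X be a nearest point of X to q, and suppose q ∈ U_j, GT(q) ∉ U_j, and ‖q − GT(q)‖₂ ≤ R̄ − R̄_j (condition (ii)). Let x_1 = d_j, x_2, …, x_{l+1} = GT(q) be a b-monotonic path with b ≤ B whose step values satisfy: every nonnegative step is at least r̄₊ > 0 and every negative step has magnitude at most r̄₋ ≥ 0. Then the number of hops satisfies l ≤ (R̄_j + ‖q − GT(q)‖₂)/r̄₊ + B·(1 + r̄₋/r̄₊) ≤ R̄/r̄₊ + B·(1 + r̄₋/r̄₊); i.e., the hop bound l̄ for the adaptively selected entry point is at most the bound l̄₀ for the fixed central entry point. -/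

import Mathlib

/-!
The step values telescope, `∑ r i = ‖dj - GT‖`, and the triangle inequality through `q` bounds this
by `Rj + ‖q - GT‖`. Conversely every step value is at least `rp`, except that each of the `b ≤ B`
negative ones may fall short of `rp` by at most `rp + rm`; hence `l * rp - B * (rp + rm) ≤ ∑ r i`.
Dividing by `rp` gives the first inequality; the second is `‖q - GT‖ ≤ R - Rj` divided by `rp`.
-/

theorem sum_castSucc_sub_succ {l : ℕ} (f : Fin (l + 1) → ℝ) :
    ∑ i : Fin l, (f i.castSucc - f i.succ) = f 0 - f (Fin.last l) := by
  have h1 := Fin.sum_univ_succ f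
  have h2 := Fin.sum_univ_castSucc f
  rw [Finset.sum_sub_distrib]
  linarith

/-- **Theorem 4.5, case (ii).** Let `X` be a finite database in `ℝ^d`,
`D ⊆ X` a finite set of sites, `U` a region of diameter at most `R̄` containing
`X` and the query `q`, and `Uj` the Voronoi cell of `dj` (points of `U` whose
unique nearest site in `D` is `dj`), with `dj ∈ Uj` and diameter of `Uj` at
most `R̄_j`. Let `GT` be a nearest point of `X` to `q`, and suppose `q ∈ Uj`,
`GT ∉ Uj`, and `‖q - GT‖ ≤ R̄ - R̄_j`. If `x 0 = dj, …, x l = GT` is a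
`b`-monotonic path with `b ≤ B` whose nonnegative step values are at least
`r̄₊ > 0` and whose negative step values have magnitude at most `r̄₋ ≥ 0`, then
`l ≤ (R̄_j + ‖q - GT‖)/r̄₊ + B·(1 + r̄₋/r̄₊) ≤ R̄/r̄₊ + B·(1 + r̄₋/r̄₊)`. -/
theorem adaptive_entry_point_case_ii
    {d l b : ℕ} (B : ℕ)
    (X D : Finset (EuclideanSpace ℝ (Fin d))) (hDX : D ⊆ X)
    (U : Set (EuclideanSpace ℝ (Fin d))) (hXU : ↑X ⊆ U)
    (q : EuclideanSpace ℝ (Fin d)) (hqU : q ∈ U)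
    (R : ℝ) (hdiamU : ∀ y ∈ U, ∀ z ∈ U, ‖y - z‖ ≤ R)
    (dj : EuclideanSpace ℝ (Fin d)) (hdjD : dj ∈ D)
    (Uj : Set (EuclideanSpace ℝ (Fin d)))
    (hUj : Uj = {y ∈ U | ∀ e ∈ D, e ≠ dj → ‖y - dj‖ < ‖y - e‖})
    (hdjUj : dj ∈ Uj)
    (Rj : ℝ) (hdiamUj : ∀ y ∈ Uj, ∀ z ∈ Uj, ‖y - z‖ ≤ Rj)
    (GT : EuclideanSpace ℝ (Fin d)) (hGTX : GT ∈ X)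
    (hGT : ∀ y ∈ X, ‖q - GT‖ ≤ ‖q - y‖)
    (hqUj : q ∈ Uj) (hGTUj : GT ∉ Uj)
    (hΔ : ‖q - GT‖ ≤ R - Rj)
    (x : Fin (l + 1) → EuclideanSpace ℝ (Fin d))
    (hx0 : x 0 = dj) (hxl : x (Fin.last l) = GT)
    (r : Fin l → ℝ)
    (hr : ∀ i : Fin l,
      r i = ‖x i.castSucc - x (Fin.last l)‖ - ‖x i.succ - x (Fin.last l)‖)
    (hb : (Finset.univ.filter (fun i : Fin l => r i < 0)).card = b)
    (hbB : b ≤ B)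
    (rp rm : ℝ) (hrp : 0 < rp) (hrm : 0 ≤ rm)
    (hplus : ∀ i : Fin l, 0 ≤ r i → rp ≤ r i)
    (hminus : ∀ i : Fin l, r i < 0 → |r i| ≤ rm) :
    (l : ℝ) ≤ (Rj + ‖q - GT‖) / rp + (B : ℝ) * (1 + rm / rp) ∧
    (Rj + ‖q - GT‖) / rp + (B : ℝ) * (1 + rm / rp) ≤
      R / rp + (B : ℝ) * (1 + rm / rp) := by
  have hsum : ∑ i, r i = ‖dj - GT‖ := by
    simp_rw [hr]
    rw [sum_castSucc_sub_succ (fun i => ‖x i - x (Fin.last l)‖)]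
    simp [hx0, hxl]
  have htri : ‖dj - GT‖ ≤ Rj + ‖q - GT‖ := by
    have h1 := norm_sub_le_norm_sub_add_norm_sub dj q GT
    have h2 := hdiamUj dj hdjUj q hqUj
    linarith
  -- The uniform lower bound on a step value, with the deficit `rp + rm` charged to negative steps.
  have hstep : ∀ i, rp - (if r i < 0 then rp + rm else 0) ≤ r i := by
    intro i
    split_ifs with h
    · have h1 := hminus i h
      rw [abs_of_neg h] at h1
      linarith
    · have h1 := hplus i (not_lt.mp h)
      linarith
  have hlow : (l : ℝ) * rp - b * (rp + rm) ≤ ∑ i, r i := by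
    have h := Finset.sum_le_sum (fun i (_ : i ∈ Finset.univ) => hstep i)
    rw [Finset.sum_sub_distrib, ← Finset.sum_filter, Finset.sum_const, Finset.sum_const, hb] at h
    simpa [mul_add] using h
  have hbB' : (b : ℝ) * (rp + rm) ≤ B * (rp + rm) := by
    have : (b : ℝ) ≤ B := by exact_mod_cast hbB
    gcongr
  constructor
  · have heq : (Rj + ‖q - GT‖) / rp + (B : ℝ) * (1 + rm / rp)
        = (Rj + ‖q - GT‖ + B * (rp + rm)) / rp := by
      field_simp
    rw [heq, le_div_iff₀ hrp]
    linarith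
  · have : Rj + ‖q - GT‖ ≤ R := by linarith
    gcongr
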